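/- Let p, q ∈ R be idempotents such that p - q and (1-p) - q are both group invertible. Then p*q - q*p, q1 - q1^2 and q4 - q4^2 are group invertible and (p*q - q*p)*(p*q - q*p)^# = (q1 - q1^2)*(q1 - q1^2)^# + (q4 - q4^2)*(q4 - q4^2)^#. -/

import Mathlib

/-!
An intertwining relation `x * a = b * x` passes to the group inverses: `x * a^# = b^# * x`. Taking
`b = -a`, anticommutation is inherited by group inverses, so the reverse order law
`(a * b)^# = b^# * a^#` holds for anticommuting `a`, `b`. It applies to the commutator
`k = p * q - q * p = (1 - p - q) * (p - q)`, whose two factors anticommute. Now `k²` commutes with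
`p`, and `q1 - q1² = p * (-k²)`, `q4 - q4² = (1 - p) * (-k²)`. As `-k²` has the same idempotent
`e = k * k^#` as `k`, the right-hand side is `e * p + e * (1 - p) = e`.
-/

variable {R : Type*} [Ring R]

/-- `c` is a group inverse of `a`. -/
def IsGroupInvOf (a c : R) : Prop := a * c * a = a ∧ c * a * c = c ∧ a * c = c * a

/-- `a` is group invertible. -/
def GroupInvertible (a : R) : Prop := ∃ c, IsGroupInvOf a c

/-- The group inverse `a^#` (junk value `0` if it does not exist). -/
noncomputable def gi (a : R) : R :=
  haveI := Classical.dec (GroupInvertible a)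
  if h : GroupInvertible a then h.choose else 0

/-- The spectral idempotent `a^π = 1 - a * a^#`. -/
noncomputable def sp (a : R) : R := 1 - a * gi a

theorem mul_mul_mul_eq_of_commute {S : Type*} [Semigroup S] {a b d : S}
    (h : Commute a (b * d)) (c : S) : a * b * (d * c) = b * d * (a * c) := by
  calc a * b * (d * c) = a * (b * d) * c := by simp only [mul_assoc]
    _ = b * d * (a * c) := by rw [h.eq, mul_assoc]

namespace IsGroupInvOf

variable {a b c d x : R}

theorem self_of_isIdempotentElem (ha : IsIdempotentElem a) : IsGroupInvOf a a :=
  ⟨by rw [ha, ha], by rw [ha, ha], rfl⟩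

theorem groupInvertible (h : IsGroupInvOf a c) : GroupInvertible a := ⟨c, h⟩

protected theorem commute (h : IsGroupInvOf a c) : Commute a c := h.2.2

protected theorem symm (h : IsGroupInvOf a c) : IsGroupInvOf c a := ⟨h.2.1, h.1, h.2.2.symm⟩

protected theorem neg (h : IsGroupInvOf a c) : IsGroupInvOf (-a) (-c) := by
  simpa only [IsGroupInvOf, neg_mul_neg, neg_mul, mul_neg, neg_neg, neg_inj] using h

theorem mul_self_mul_inv (h : IsGroupInvOf a c) : a * a * c = a := by
  rw [mul_assoc, h.commute, ← mul_assoc, h.1]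

theorem inv_mul_mul_self (h : IsGroupInvOf a c) : c * a * a = a := by
  rw [← h.commute, h.1]

theorem semiconjBy (ha : IsGroupInvOf a c) (hb : IsGroupInvOf b d) (hx : SemiconjBy x a b) :
    SemiconjBy x c d := by
  have left : d * b * (x * c) = x * c := by
    have factor : x * c = b * (x * (c * c)) := by
      calc x * c = x * a * (c * c) := by
            rw [mul_assoc, ← mul_assoc a, ha.symm.inv_mul_mul_self]
        _ = b * (x * (c * c)) := by rw [hx.eq, mul_assoc]
    rw [factor, ← mul_assoc, hb.inv_mul_mul_self]
  have right : d * x * (a * c) = d * x := by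
    have factor : d * x = d * d * x * a := by
      calc d * x = d * d * (b * x) := by rw [← mul_assoc, hb.symm.mul_self_mul_inv]
        _ = d * d * x * a := by rw [← hx.eq, ← mul_assoc]
    rw [factor, mul_assoc, ← mul_assoc a, ha.mul_self_mul_inv]
  calc x * c = d * (b * x) * c := by rw [← left]; simp only [mul_assoc]
    _ = d * x * (a * c) := by rw [← hx.eq]; simp only [mul_assoc]
    _ = d * x := right

theorem commute_inv (h : IsGroupInvOf a c) (hx : Commute x a) : Commute x c :=
  h.semiconjBy h hx

theorem unique (hc : IsGroupInvOf a c) (hd : IsGroupInvOf a d) : c = d := by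
  simpa only [SemiconjBy, one_mul, mul_one] using hc.semiconjBy hd (SemiconjBy.one_left a)

theorem gi_eq (h : IsGroupInvOf a c) : gi a = c := by
  refine IsGroupInvOf.unique ?_ h
  rw [gi, dif_pos h.groupInvertible]
  exact h.groupInvertible.choose_spec

theorem commute_mul_inv_of_semiconjBy_neg (h : IsGroupInvOf a c) (hx : SemiconjBy x a (-a)) :
    Commute x (a * c) := by
  simpa only [neg_mul_neg, Commute] using hx.mul_right (h.semiconjBy h.neg hx)

/-- Only the idempotents `a * a^#` and `b * b^#` have to commute with the opposite factors, so this
covers both commuting and anticommuting `a`, `b`. -/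
protected theorem mul (ha : IsGroupInvOf a c) (hb : IsGroupInvOf b d) (hab : Commute b (a * c))
    (hba : Commute a (b * d)) : IsGroupInvOf (a * b) (d * c) := by
  have hd : Commute d (a * c) := (hb.commute_inv hab.symm).symm
  have idem_comm : Commute (a * c) (b * d) := hab.symm.mul_right hd.symm
  have mul_inv : a * b * (d * c) = b * d * (a * c) := mul_mul_mul_eq_of_commute hba c
  have inv_mul : d * c * (a * b) = a * c * (b * d) := by
    rw [ha.commute, hb.commute]
    exact mul_mul_mul_eq_of_commute (ha.commute.eq ▸ hd) b
  refine ⟨?_, ?_, ?_⟩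
  · calc a * b * (d * c) * (a * b) = a * b * (d * c * (a * b)) := mul_assoc _ _ _
      _ = a * (b * (a * c)) * (b * d) := by rw [inv_mul]; simp only [mul_assoc]
      _ = a * a * c * (b * b * d) := by rw [hab.eq]; simp only [mul_assoc]
      _ = a * b := by rw [ha.mul_self_mul_inv, hb.mul_self_mul_inv]
  · calc d * c * (a * b) * (d * c) = a * c * (b * d) * (d * c) := by rw [inv_mul]
      _ = a * c * (b * d * d) * c := by simp only [mul_assoc]
      _ = d * (a * c * c) := by rw [hb.symm.inv_mul_mul_self, ← hd.eq]; simp only [mul_assoc]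
      _ = d * c := by rw [ha.symm.inv_mul_mul_self]
  · rw [mul_inv, inv_mul, idem_comm.eq]

theorem mul_of_commute (ha : IsGroupInvOf a c) (hb : IsGroupInvOf b d) (hab : Commute a b) :
    IsGroupInvOf (a * b) (d * c) :=
  ha.mul hb (hab.symm.mul_right (ha.commute_inv hab.symm)) (hab.mul_right (hb.commute_inv hab))

theorem mul_of_anticommute (ha : IsGroupInvOf a c) (hb : IsGroupInvOf b d)
    (hab : a * b = -(b * a)) : IsGroupInvOf (a * b) (d * c) := by
  have a_negates_b : SemiconjBy a b (-b) := by rw [SemiconjBy, hab, neg_mul]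
  have b_negates_a : SemiconjBy b a (-a) := by rw [SemiconjBy, neg_mul, hab, neg_neg]
  exact ha.mul hb (ha.commute_mul_inv_of_semiconjBy_neg b_negates_a)
    (hb.commute_mul_inv_of_semiconjBy_neg a_negates_b)

protected theorem sq (h : IsGroupInvOf a c) : IsGroupInvOf (a ^ 2) (c ^ 2) := by
  simpa only [pow_two] using h.mul_of_commute h (Commute.refl a)

theorem sq_mul_sq (h : IsGroupInvOf a c) : a ^ 2 * c ^ 2 = a * c := by
  rw [pow_two, pow_two, ← mul_assoc, h.mul_self_mul_inv]

end IsGroupInvOf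

section Idempotents

variable {p q c : R}

theorem commutator_eq_one_sub_sub_mul_sub (hp : IsIdempotentElem p) (hq : IsIdempotentElem q) :
    p * q - q * p = (1 - p - q) * (p - q) := by
  simp only [mul_sub, sub_mul, one_mul, hp.eq, hq.eq]
  abel

theorem one_sub_sub_mul_sub_anticommute (hp : IsIdempotentElem p) (hq : IsIdempotentElem q) :
    (1 - p - q) * (p - q) = -((p - q) * (1 - p - q)) := by
  simp only [mul_sub, sub_mul, mul_one, one_mul, hp.eq, hq.eq]
  abel

theorem groupInvertible_commutator (hp : IsIdempotentElem p) (hq : IsIdempotentElem q)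
    (hsub : GroupInvertible (p - q)) (hcompl : GroupInvertible (1 - p - q)) :
    GroupInvertible (p * q - q * p) := by
  obtain ⟨c, hc⟩ := hsub
  obtain ⟨d, hd⟩ := hcompl
  rw [commutator_eq_one_sub_sub_mul_sub hp hq]
  exact ⟨c * d, hd.mul_of_anticommute hc (one_sub_sub_mul_sub_anticommute hp hq)⟩

theorem semiconjBy_commutator (hp : IsIdempotentElem p) (q : R) :
    SemiconjBy (p * q - q * p) p (1 - p) := by
  simp only [SemiconjBy, sub_mul, mul_sub, one_mul, ← mul_assoc, hp.eq, mul_assoc q p p]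
  abel

theorem commute_commutator_sq (hp : IsIdempotentElem p) (q : R) :
    Commute p ((p * q - q * p) ^ 2) := by
  have swap := semiconjBy_commutator hp q
  have swap_back : SemiconjBy (p * q - q * p) (1 - p) p := by
    simpa only [sub_sub_cancel] using (SemiconjBy.one_right _).sub_right swap
  rw [sq]
  exact (swap_back.mul_left swap).symm

theorem corner_sub_sq_eq (hp : IsIdempotentElem p) (hq : IsIdempotentElem q) :
    p * q * p - (p * q * p) ^ 2 = p * -(p * q - q * p) ^ 2 := by
  have left_corner : p * (p * q - q * p) = p * q * (1 - p) := by
    rw [mul_sub, mul_sub, ← mul_assoc, hp.eq, mul_one, mul_assoc p q p]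
  have right_corner : (p * q - q * p) * p = p * q * p - q * p := by
    rw [sub_mul, mul_assoc q p p, hp.eq]
  have corner : p * (p * q - q * p) ^ 2 = (p * q * p) ^ 2 - p * q * p := by
    calc p * (p * q - q * p) ^ 2 = p * q * ((1 - p) * (p * q - q * p)) := by
          rw [sq, ← mul_assoc, left_corner, mul_assoc]
      _ = p * q * (p * q * p - q * p) := by rw [← (semiconjBy_commutator hp q).eq, right_corner]
      _ = p * q * (p * p) * q * p - p * (q * q) * p := by
          rw [hp.eq, mul_sub]; simp only [mul_assoc]
      _ = (p * q * p) ^ 2 - p * q * p := by rw [hq.eq, sq]; simp only [mul_assoc]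
  rw [mul_neg, corner, neg_sub]

theorem IsGroupInvOf.corner_sub_sq (hp : IsIdempotentElem p) (hq : IsIdempotentElem q)
    (hc : IsGroupInvOf (p * q - q * p) c) :
    IsGroupInvOf (p * q * p - (p * q * p) ^ 2) (-c ^ 2 * p) := by
  rw [corner_sub_sq_eq hp hq]
  exact (self_of_isIdempotentElem hp).mul_of_commute hc.sq.neg
    (commute_commutator_sq hp q).neg_right

theorem corner_sub_sq_mul_gi (hp : IsIdempotentElem p) (hq : IsIdempotentElem q)
    (hc : IsGroupInvOf (p * q - q * p) c) :
    (p * q * p - (p * q * p) ^ 2) * gi (p * q * p - (p * q * p) ^ 2) =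
      (p * q - q * p) * c * p := by
  have hcomm : Commute p (-(p * q - q * p) ^ 2) := (commute_commutator_sq hp q).neg_right
  rw [(hc.corner_sub_sq hp hq).gi_eq, corner_sub_sq_eq hp hq,
    mul_mul_mul_eq_of_commute (hcomm.mul_right (hc.sq.neg.commute_inv hcomm)), hp.eq,
    neg_mul_neg, hc.sq_mul_sq]

theorem commutator_one_sub (p q : R) : (1 - p) * q - q * (1 - p) = -(p * q - q * p) := by
  simp only [sub_mul, mul_sub, one_mul, mul_one, sub_sub_sub_cancel_left, neg_sub]

end Idempotents

theorem spectral_idem_commutator (p q q1 q2 q3 q4 : R) (hp : p * p = p) (hq : q * q = q)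
    (h1 : q1 = p * q * p) (h2 : q2 = p * q * (1 - p))
    (h3 : q3 = (1 - p) * q * p) (h4 : q4 = (1 - p) * q * (1 - p))
    (hpq : GroupInvertible (p - q)) (hpbq : GroupInvertible ((1 - p) - q)) :
    GroupInvertible (p * q - q * p) ∧ GroupInvertible (q1 - q1 ^ 2) ∧
      GroupInvertible (q4 - q4 ^ 2) ∧
      (p * q - q * p) * gi (p * q - q * p) =
        (q1 - q1 ^ 2) * gi (q1 - q1 ^ 2) + (q4 - q4 ^ 2) * gi (q4 - q4 ^ 2) := by
  have hp' : IsIdempotentElem (1 - p) := IsIdempotentElem.one_sub hp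
  obtain ⟨c, hc⟩ := groupInvertible_commutator hp hq hpq hpbq
  have hc' : IsGroupInvOf ((1 - p) * q - q * (1 - p)) (-c) := by
    rw [commutator_one_sub]
    exact hc.neg
  rw [h1, h4]
  refine ⟨hc.groupInvertible, (hc.corner_sub_sq hp hq).groupInvertible,
    (hc'.corner_sub_sq hp' hq).groupInvertible, ?_⟩
  rw [hc.gi_eq, corner_sub_sq_mul_gi hp hq hc, corner_sub_sq_mul_gi hp' hq hc',
    commutator_one_sub, neg_mul_neg, ← mul_add, add_sub_cancel, mul_one]
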